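/- The function m_α(u) = 1/(u^{2α} + 2cos(πα)u^α + 1) on (0,∞) is hyperbolically completely monotone if and only if |α| ≤ 1/2. -/

import Mathlib

/-- `f` is completely monotone on `s`. -/
def CompletelyMonotoneOn (f : ℝ → ℝ) (s : Set ℝ) : Prop :=
  ∀ n : ℕ, ∀ x ∈ s, 0 ≤ (-1 : ℝ) ^ n * iteratedDeriv n f x

/-- `f` is hyperbolically completely monotone. -/
def HCM (f : ℝ → ℝ) : Prop :=
  ∀ u : ℝ, 0 < u → ∃ H : ℝ → ℝ, CompletelyMonotoneOn H (Set.Ici 2) ∧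
    ∀ v : ℝ, 0 < v → f (u * v) * f (u / v) = H (v + 1 / v)

/-! With `c = cos (π * α)`, the product of `1 / (u ^ (2 * α) + 2 * c * u ^ α + 1)` at `u * v` and
`u / v` is, when `0 ≤ c`, the reciprocal of a nonnegative combination of `1`, `v ^ α + v ^ (-α)` and
`v ^ (2 * α) + v ^ (-(2 * α))`. For `0 < β < 1` the integral representation of `v ^ β` shows that
`(v ^ β - v ^ (-β)) / (v - 1 / v)` is a Stieltjes transform in `w = v + 1 / v`, hence completely
monotone, so `v ^ β + v ^ (-β)` is a Bernstein function of `w` for `0 ≤ β ≤ 1`. Reciprocals of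
positive Bernstein functions are completely monotone, which settles `|α| ≤ 1 / 2`.

Conversely, if `f` is hyperbolically completely monotone with a positive limit `ℓ` at `0`, then
`f a * f b` is completely monotone in `a + b` when `a * b = u ^ 2` is fixed. Letting `u → 0` turns
it into `ℓ * f (a + b)`, so `f` is antitone and convex near `0`. For the function above, the first
property forces `0 ≤ c` and the second one `|α| ≤ 1`, whereas `cos (π * α) < 0` for
`1 / 2 < |α| ≤ 1`.
-/

open Set Filter Topology MeasureTheory
open scoped ContDiff

section IteratedDeriv

variable {𝕜 E : Type*} [NontriviallyNormedField 𝕜] [NormedAddCommGroup E] [NormedSpace 𝕜 E]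
  {s : Set 𝕜} {F : ℕ → 𝕜 → E}

lemma eqOn_iteratedDeriv_of_hasDerivAt (hs : IsOpen s)
    (hF : ∀ n, ∀ x ∈ s, HasDerivAt (F n) (F (n + 1) x) x) (n : ℕ) :
    EqOn (iteratedDeriv n (F 0)) (F n) s := by
  induction n with
  | zero => exact fun x _ => by rw [iteratedDeriv_zero]
  | succ n ih =>
    intro x hx
    rw [iteratedDeriv_succ, (ih.eventuallyEq_of_mem (hs.mem_nhds hx)).deriv_eq, (hF n x hx).deriv]

lemma contDiffOn_infty_of_hasDerivAt (hs : IsOpen s)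
    (hF : ∀ n, ∀ x ∈ s, HasDerivAt (F n) (F (n + 1) x) x) : ContDiffOn 𝕜 ∞ (F 0) s := by
  refine contDiffOn_of_differentiableOn_deriv (n := ⊤) fun n _ => ?_
  have hFn : DifferentiableOn 𝕜 (F n) s :=
    fun x hx => (hF n x hx).differentiableAt.differentiableWithinAt
  exact hFn.congr fun x hx => (iteratedDerivWithin_of_isOpen hs hx).trans
    (eqOn_iteratedDeriv_of_hasDerivAt hs hF n hx)

lemma iteratedDeriv_comp_mul_left (f : 𝕜 → E) (c : 𝕜) (n : ℕ) :
    iteratedDeriv n (fun x => f (c * x)) = fun x => c ^ n • iteratedDeriv n f (c * x) := by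
  induction n with
  | zero => simp
  | succ n ih =>
    funext x
    rw [iteratedDeriv_succ, ih, deriv_fun_const_smul_field, deriv_comp_mul_left, iteratedDeriv_succ,
      smul_smul, pow_succ]

end IteratedDeriv

namespace CompletelyMonotoneOn

variable {f : ℝ → ℝ} {s t : Set ℝ}

lemma mono (hf : CompletelyMonotoneOn f s) (hts : t ⊆ s) : CompletelyMonotoneOn f t :=
  fun n x hx => hf n x (hts hx)

lemma const {c : ℝ} (hc : 0 ≤ c) : CompletelyMonotoneOn (fun _ => c) s := by
  rintro (_ | n) x -
  · simpa using hc
  · simp [iteratedDeriv_const]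

lemma const_mul {c : ℝ} (hc : 0 ≤ c) (hf : CompletelyMonotoneOn f s) :
    CompletelyMonotoneOn (fun x => c * f x) s := by
  intro n x hx
  rw [iteratedDeriv_const_mul_field, mul_left_comm]
  exact mul_nonneg hc (hf n x hx)

lemma congr {g : ℝ → ℝ} (hs : IsOpen s) (hf : CompletelyMonotoneOn f s)
    (h : EqOn g f s) : CompletelyMonotoneOn g s := by
  intro n x hx
  rw [(h.eventuallyEq_of_mem (hs.mem_nhds hx)).iteratedDeriv_eq]
  exact hf n x hx

lemma comp_mul_left {c : ℝ} (hc : 0 ≤ c) (hf : CompletelyMonotoneOn f s)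
    (hmaps : MapsTo (c * ·) t s) : CompletelyMonotoneOn (fun x => f (c * x)) t := by
  intro n x hx
  simp only [iteratedDeriv_comp_mul_left, smul_eq_mul]
  rw [mul_left_comm]
  exact mul_nonneg (pow_nonneg hc n) (hf n _ (hmaps hx))

lemma antitoneOn (hf : CompletelyMonotoneOn f s) (hconv : Convex ℝ s)
    (hdiff : DifferentiableOn ℝ f s) : AntitoneOn f s := by
  refine antitoneOn_of_deriv_nonpos hconv hdiff.continuousOn (hdiff.mono interior_subset)
    fun x hx => ?_
  simpa [iteratedDeriv_one] using hf 1 x (interior_subset hx)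

lemma convexOn (hf : CompletelyMonotoneOn f s) (hs : IsOpen s) (hconv : Convex ℝ s)
    (hsmooth : ContDiffOn ℝ 2 f s) : ConvexOn ℝ s f := by
  refine convexOn_of_deriv2_nonneg' hconv (hsmooth.differentiableOn two_ne_zero)
    ((hsmooth.deriv_of_isOpen hs (m := 1) (by norm_num)).differentiableOn one_ne_zero)
    fun x hx => ?_
  simpa [iteratedDeriv_eq_iterate] using hf 2 x hx

end CompletelyMonotoneOn

/-- Bernstein functions on `s`; they serve as sources of completely monotone reciprocals.
Smoothness is two-sided at each point of `s` because `CompletelyMonotoneOn` is phrased with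
`iteratedDeriv`, which takes junk values where derivatives do not exist. -/
structure BernsteinOn (g : ℝ → ℝ) (s : Set ℝ) : Prop where
  contDiffAt : ∀ x ∈ s, ContDiffAt ℝ ∞ g x
  nonneg : ∀ x ∈ s, 0 ≤ g x
  completelyMonotoneOn_deriv : CompletelyMonotoneOn (deriv g) s

namespace BernsteinOn

variable {f g : ℝ → ℝ} {s : Set ℝ}

lemma mono {t : Set ℝ} (hg : BernsteinOn g s) (hts : t ⊆ s) : BernsteinOn g t where
  contDiffAt x hx := hg.contDiffAt x (hts hx)
  nonneg x hx := hg.nonneg x (hts hx)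
  completelyMonotoneOn_deriv := hg.completelyMonotoneOn_deriv.mono hts

lemma iteratedDeriv_succ_nonneg (hg : BernsteinOn g s) (n : ℕ) {x : ℝ} (hx : x ∈ s) :
    0 ≤ (-1) ^ n * iteratedDeriv (n + 1) g x := by
  rw [iteratedDeriv_succ']
  exact hg.completelyMonotoneOn_deriv n x hx

lemma const {c : ℝ} (hc : 0 ≤ c) : BernsteinOn (fun _ => c) s where
  contDiffAt _ _ := contDiffAt_const
  nonneg _ _ := hc
  completelyMonotoneOn_deriv := by simpa using CompletelyMonotoneOn.const le_rfl

lemma id (hs : s ⊆ Ici 0) : BernsteinOn (fun x => x) s where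
  contDiffAt _ _ := contDiffAt_id
  nonneg _ hx := hs hx
  completelyMonotoneOn_deriv := by simpa using CompletelyMonotoneOn.const zero_le_one

lemma add (hf : BernsteinOn f s) (hg : BernsteinOn g s) : BernsteinOn (fun x => f x + g x) s where
  contDiffAt x hx := (hf.contDiffAt x hx).add (hg.contDiffAt x hx)
  nonneg x hx := add_nonneg (hf.nonneg x hx) (hg.nonneg x hx)
  completelyMonotoneOn_deriv n x hx := by
    rw [← iteratedDeriv_succ', iteratedDeriv_fun_add
      ((hf.contDiffAt x hx).of_le (mod_cast le_top)) ((hg.contDiffAt x hx).of_le (mod_cast le_top)),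
      mul_add]
    exact add_nonneg (hf.iteratedDeriv_succ_nonneg n hx) (hg.iteratedDeriv_succ_nonneg n hx)

lemma const_mul {c : ℝ} (hc : 0 ≤ c) (hg : BernsteinOn g s) :
    BernsteinOn (fun x => c * g x) s where
  contDiffAt x hx := contDiffAt_const.mul (hg.contDiffAt x hx)
  nonneg x hx := mul_nonneg hc (hg.nonneg x hx)
  completelyMonotoneOn_deriv := by
    have hderiv : (deriv fun x => c * g x) = fun x => c * deriv g x :=
      funext fun _ => deriv_const_mul_field c
    exact hderiv ▸ hg.completelyMonotoneOn_deriv.const_mul hc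

lemma completelyMonotoneOn_inv (hg : BernsteinOn g s) (hpos : ∀ x ∈ s, 0 < g x) :
    CompletelyMonotoneOn (fun x => (g x)⁻¹) s := by
  intro n x hx
  induction n using Nat.strong_induction_on with
  | _ n ih =>
  rcases n with _ | n
  · simpa using (hpos x hx).le
  have hgx := hg.contDiffAt x hx
  have hsmooth (k : ℕ) : ContDiffAt ℝ k g x := hgx.of_le (mod_cast le_top)
  have hsmooth_inv (k : ℕ) : ContDiffAt ℝ k (fun y => (g y)⁻¹) x :=
    (hsmooth k).inv (hpos x hx).ne'
  have hone : (fun y => g y * (g y)⁻¹) =ᶠ[𝓝 x] fun _ => 1 := by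
    filter_upwards [hgx.continuousAt.eventually_ne (hpos x hx).ne'] with y hy
    exact mul_inv_cancel₀ hy
  have leibniz : ∑ i ∈ Finset.range (n + 1), ((n + 1).choose (i + 1) : ℝ) *
      iteratedDeriv (i + 1) g x * iteratedDeriv (n - i) (fun y => (g y)⁻¹) x +
      g x * iteratedDeriv (n + 1) (fun y => (g y)⁻¹) x = 0 := by
    have h := hone.iteratedDeriv_eq (n + 1)
    rw [iteratedDeriv_fun_mul (hsmooth _) (hsmooth_inv _), Finset.sum_range_succ'] at h
    simpa [iteratedDeriv_const] using h
  refine nonneg_of_mul_nonneg_right (a := g x) ?_ (hpos x hx)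
  calc (0 : ℝ)
      ≤ ∑ i ∈ Finset.range (n + 1), ((n + 1).choose (i + 1) : ℝ) *
        ((-1) ^ i * iteratedDeriv (i + 1) g x) *
        ((-1) ^ (n - i) * iteratedDeriv (n - i) (fun y => (g y)⁻¹) x) :=
        Finset.sum_nonneg fun i _ => mul_nonneg
          (mul_nonneg (Nat.cast_nonneg _) (hg.iteratedDeriv_succ_nonneg i hx))
          (ih (n - i) (by lia))
    _ = (-1) ^ n * ∑ i ∈ Finset.range (n + 1), ((n + 1).choose (i + 1) : ℝ) *
        iteratedDeriv (i + 1) g x * iteratedDeriv (n - i) (fun y => (g y)⁻¹) x := by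
        rw [Finset.mul_sum]
        refine Finset.sum_congr rfl fun i hi => ?_
        rw [← pow_mul_pow_sub (-1 : ℝ) (Finset.mem_range_succ_iff.1 hi)]
        ring
    _ = g x * ((-1) ^ (n + 1) * iteratedDeriv (n + 1) (fun y => (g y)⁻¹) x) := by
        linear_combination (-1) ^ n * leibniz

end BernsteinOn

lemma CompletelyMonotoneOn.exists_bernsteinOn {G : ℝ → ℝ} {s : Set ℝ} [s.OrdConnected]
    (hG : CompletelyMonotoneOn G s) (hs : IsOpen s) (hsmooth : ContDiffOn ℝ ∞ G s) {a c : ℝ}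
    (ha : a ∈ s) (hc : 0 ≤ c) :
    ∃ P : ℝ → ℝ, P a = c ∧ BernsteinOn P (s ∩ Ici a) ∧ ∀ x ∈ s, HasDerivAt P (G x) x := by
  set P : ℝ → ℝ := fun x => c + ∫ t in a..x, G t
  have hPderiv : ∀ x ∈ s, HasDerivAt P (G x) x := fun x hx =>
    (intervalIntegral.integral_hasDerivAt_right
      (hsmooth.continuousOn.mono (OrdConnected.uIcc_subset ‹_› ha hx)).intervalIntegrable
      (hsmooth.continuousOn.stronglyMeasurableAtFilter hs x hx)
      (hsmooth.continuousOn.continuousAt (hs.mem_nhds hx))).const_add c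
  have hderiv : EqOn (deriv P) G s := fun x hx => (hPderiv x hx).deriv
  have hPsmooth : ContDiffOn ℝ ∞ P s := (contDiffOn_infty_iff_deriv_of_isOpen hs).2
    ⟨fun x hx => (hPderiv x hx).differentiableAt.differentiableWithinAt, hsmooth.congr hderiv⟩
  refine ⟨P, by simp [P], ⟨fun x hx => hPsmooth.contDiffAt (hs.mem_nhds hx.1), ?_,
    (hG.congr hs hderiv).mono inter_subset_left⟩, hPderiv⟩
  rintro x ⟨hx, hax⟩
  refine add_nonneg hc (intervalIntegral.integral_nonneg hax fun t ht => ?_)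
  simpa using hG 0 t (OrdConnected.out ‹_› ha hx ht)

section StieltjesTransform

variable {X : Type*} [MeasurableSpace X] {μ : Measure X} {ρ φ : X → ℝ}

/-- The Stieltjes transform in `w`, with exponent `n + 1`, of the measure `ρ μ` pushed forward along
`φ`. Higher `n` occur in the derivatives of the classical case `n = 0`. -/
noncomputable def stieltjesTransform (μ : Measure X) (ρ φ : X → ℝ) (n : ℕ) (w : ℝ) : ℝ :=
  ∫ t, ρ t / (w + φ t) ^ (n + 1) ∂μ

lemma integrable_div_add_pow (hφ : 0 ≤ᵐ[μ] φ) (hφm : AEMeasurable φ μ) {w : ℝ} (hw : 0 < w)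
    (hint : Integrable (fun t => ρ t / (w + φ t)) μ) (n : ℕ) :
    Integrable (fun t => ρ t / (w + φ t) ^ (n + 1)) μ := by
  have hmeas : AEStronglyMeasurable (fun t => ((w + φ t) ^ n)⁻¹) μ :=
    ((hφm.const_add w).pow_const n).inv.aestronglyMeasurable
  have hbound : ∀ᵐ t ∂μ, ‖((w + φ t) ^ n)⁻¹‖ ≤ (w ^ n)⁻¹ := by
    filter_upwards [hφ] with t ht
    have hle : w ≤ w + φ t := le_add_of_nonneg_right ht
    rw [Real.norm_of_nonneg (by positivity [hw.trans_le hle])]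
    gcongr
  simpa only [pow_succ', ← div_div, ← div_eq_mul_inv] using hint.mul_bdd hmeas hbound

lemma hasDerivAt_stieltjesTransform (hφ : 0 ≤ᵐ[μ] φ) (hφm : AEMeasurable φ μ)
    (hint : ∀ w > 0, Integrable (fun t => ρ t / (w + φ t)) μ) (n : ℕ) {w : ℝ} (hw : 0 < w) :
    HasDerivAt (stieltjesTransform μ ρ φ n)
      (-(n + 1) * stieltjesTransform μ ρ φ (n + 1) w) w := by
  have hkernel (n : ℕ) {x : ℝ} (hx : 0 < x) :=
    integrable_div_add_pow hφ hφm hx (hint x hx) n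
  have hderiv : ∀ᵐ t ∂μ, ∀ x ∈ Ioi (w / 2), HasDerivAt (fun x => ρ t / (x + φ t) ^ (n + 1))
      (-(n + 1) * (ρ t / (x + φ t) ^ (n + 2))) x := by
    filter_upwards [hφ] with t ht x hx
    have hpos : 0 < x + φ t := add_pos_of_pos_of_nonneg ((half_pos hw).trans hx) ht
    refine (((((hasDerivAt_id' x).add_const (φ t)).fun_pow (n + 1)).fun_inv
      (pow_pos hpos _).ne').const_mul (ρ t)).congr_deriv ?_
    rw [Nat.add_sub_cancel]
    push_cast
    field_simp
    ring
  have hbound : ∀ᵐ t ∂μ, ∀ x ∈ Ioi (w / 2), ‖-(n + 1) * (ρ t / (x + φ t) ^ (n + 2))‖ ≤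
      (n + 1) * ‖ρ t / (w / 2 + φ t) ^ (n + 2)‖ := by
    filter_upwards [hφ] with t ht x hx
    have hpos : 0 < w / 2 + φ t := add_pos_of_pos_of_nonneg (half_pos hw) ht
    have hle : w / 2 + φ t ≤ x + φ t := by gcongr; exact le_of_lt hx
    rw [norm_mul, norm_neg, norm_div, norm_div, norm_pow, norm_pow,
      Real.norm_of_nonneg hpos.le, Real.norm_of_nonneg (hpos.le.trans hle),
      Real.norm_of_nonneg (by positivity : (0 : ℝ) ≤ n + 1)]
    gcongr
  have hdiff := (hasDerivAt_integral_of_dominated_loc_of_deriv_le (Ioi_mem_nhds (half_lt_self hw))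
    ((eventually_gt_nhds hw).mono fun x hx => (hkernel n hx).aestronglyMeasurable)
    (hkernel n hw) ((hkernel (n + 1) hw).aestronglyMeasurable.const_mul _) hbound
    ((hkernel (n + 1) (half_pos hw)).norm.const_mul _) hderiv).2
  rwa [integral_const_mul] at hdiff

lemma hasDerivAt_factorial_mul_stieltjesTransform (hφ : 0 ≤ᵐ[μ] φ) (hφm : AEMeasurable φ μ)
    (hint : ∀ w > 0, Integrable (fun t => ρ t / (w + φ t)) μ) (n : ℕ) {w : ℝ} (hw : 0 < w) :
    HasDerivAt (fun w => (-1) ^ n * (n.factorial : ℝ) * stieltjesTransform μ ρ φ n w)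
      ((-1) ^ (n + 1) * ((n + 1).factorial : ℝ) * stieltjesTransform μ ρ φ (n + 1) w) w := by
  refine ((hasDerivAt_stieltjesTransform hφ hφm hint n hw).const_mul
    ((-1) ^ n * (n.factorial : ℝ))).congr_deriv ?_
  rw [Nat.factorial_succ]
  push_cast
  ring

lemma contDiffOn_stieltjesTransform (hφ : 0 ≤ᵐ[μ] φ) (hφm : AEMeasurable φ μ)
    (hint : ∀ w > 0, Integrable (fun t => ρ t / (w + φ t)) μ) :
    ContDiffOn ℝ ∞ (stieltjesTransform μ ρ φ 0) (Ioi 0) := by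
  simpa using contDiffOn_infty_of_hasDerivAt isOpen_Ioi fun n _ hw =>
    hasDerivAt_factorial_mul_stieltjesTransform hφ hφm hint n hw

lemma completelyMonotoneOn_stieltjesTransform (hρ : 0 ≤ᵐ[μ] ρ) (hφ : 0 ≤ᵐ[μ] φ)
    (hφm : AEMeasurable φ μ) (hint : ∀ w > 0, Integrable (fun t => ρ t / (w + φ t)) μ) :
    CompletelyMonotoneOn (stieltjesTransform μ ρ φ 0) (Ioi 0) := by
  intro n w hw
  have hderiv := eqOn_iteratedDeriv_of_hasDerivAt isOpen_Ioi (fun n _ hw =>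
    hasDerivAt_factorial_mul_stieltjesTransform hφ hφm hint n hw) n hw
  have hnonneg : 0 ≤ stieltjesTransform μ ρ φ n w := by
    refine integral_nonneg_of_ae ?_
    filter_upwards [hρ, hφ] with t hρt hφt
    exact div_nonneg hρt (pow_nonneg (add_nonneg (le_of_lt hw) hφt) _)
  simp only [pow_zero, Nat.factorial_zero, Nat.cast_one, one_mul] at hderiv
  rw [hderiv, ← mul_assoc, ← mul_assoc, pow_mul_pow_eq_one _ (by norm_num), one_mul]
  positivity

end StieltjesTransform

section RpowAddRpowNeg

variable {β : ℝ}

lemma rpowIntegrand₀₁_sub_inv (hβ : β ∈ Ioo 0 1) {t v : ℝ} (ht : 0 < t) (hv : 0 < v) :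
    Real.rpowIntegrand₀₁ β t v - Real.rpowIntegrand₀₁ β t v⁻¹ =
      (v - 1 / v) * (t ^ (β - 1) / (v + 1 / v + (t + 1 / t))) := by
  rw [Real.rpowIntegrand₀₁_eq_pow_div hβ ht.le hv.le,
    Real.rpowIntegrand₀₁_eq_pow_div hβ ht.le (inv_nonneg.2 hv.le)]
  field_simp
  ring

lemma rpow_div_le_rpowIntegrand₀₁ (hβ : β ∈ Ioo 0 1) {t w : ℝ} (ht : 0 < t) (hw : 0 < w) :
    t ^ (β - 1) / (w + (t + 1 / t)) ≤ w⁻¹ * Real.rpowIntegrand₀₁ β t w := by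
  have hle : t + w ≤ w + (t + 1 / t) := by linarith [one_div_pos.2 ht]
  calc t ^ (β - 1) / (w + (t + 1 / t))
      ≤ t ^ (β - 1) / (t + w) := by gcongr
    _ = w⁻¹ * Real.rpowIntegrand₀₁ β t w := by
        rw [Real.rpowIntegrand₀₁_eq_pow_div hβ ht.le hw.le]
        field_simp

lemma exists_completelyMonotoneOn_rpow_sub_rpow_neg (hβ : β ∈ Ioo 0 1) :
    ∃ G : ℝ → ℝ, ContDiffOn ℝ ∞ G (Ioi 0) ∧ CompletelyMonotoneOn G (Ioi 0) ∧
      ∀ v > 0, v ^ β - v ^ (-β) = (v - 1 / v) * G (v + 1 / v) := by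
  obtain ⟨μ, hμ⟩ := Real.exists_measure_rpow_eq_integral_rpowIntegrand₀₁ hβ
  set ν := μ.restrict (Ioi 0)
  have hpos : ∀ᵐ t ∂ν, 0 < t := ae_restrict_mem measurableSet_Ioi
  have hρ : 0 ≤ᵐ[ν] fun t => t ^ (β - 1) := hpos.mono fun t ht => Real.rpow_nonneg ht.le _
  have hφ : 0 ≤ᵐ[ν] fun t => t + 1 / t := hpos.mono fun t ht => by
    simp only [Pi.zero_apply]
    positivity
  have hφm : AEMeasurable (fun t : ℝ => t + 1 / t) ν := by fun_prop
  have hint (w : ℝ) (hw : w > 0) : Integrable (fun t => t ^ (β - 1) / (w + (t + 1 / t))) ν := by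
    have hmeas : Measurable fun t : ℝ => t ^ (β - 1) / (w + (t + 1 / t)) := by fun_prop
    refine ((hμ w hw.le).1.const_mul w⁻¹).mono' hmeas.aestronglyMeasurable ?_
    filter_upwards [hpos] with t ht
    rw [Real.norm_of_nonneg (by positivity)]
    exact rpow_div_le_rpowIntegrand₀₁ hβ ht hw
  refine ⟨stieltjesTransform ν (fun t => t ^ (β - 1)) (fun t => t + 1 / t) 0,
    contDiffOn_stieltjesTransform hφ hφm hint,
    completelyMonotoneOn_stieltjesTransform hρ hφ hφm hint, fun v hv => ?_⟩
  have hv' : 0 < v⁻¹ := inv_pos.2 hv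
  calc v ^ β - v ^ (-β)
      = ∫ t, Real.rpowIntegrand₀₁ β t v - Real.rpowIntegrand₀₁ β t v⁻¹ ∂ν := by
        rw [Real.rpow_neg hv.le, ← Real.inv_rpow hv.le, (hμ v hv.le).2, (hμ v⁻¹ hv'.le).2,
          integral_sub (hμ v hv.le).1 (hμ v⁻¹ hv'.le).1]
    _ = ∫ t, (v - 1 / v) * (t ^ (β - 1) / (v + 1 / v + (t + 1 / t)) ^ (0 + 1)) ∂ν := by
        refine integral_congr_ae (hpos.mono fun t ht => ?_)
        simpa only [zero_add, pow_one] using rpowIntegrand₀₁_sub_inv hβ ht hv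
    _ = (v - 1 / v) * stieltjesTransform ν (fun t => t ^ (β - 1)) (fun t => t + 1 / t) 0
        (v + 1 / v) := integral_const_mul _ _

lemma hasDerivAt_rpow_add_rpow_neg {v : ℝ} (hv : 0 < v) :
    HasDerivAt (fun v => v ^ β + v ^ (-β)) (β / v * (v ^ β - v ^ (-β))) v := by
  refine ((Real.hasDerivAt_rpow_const (.inl hv.ne')).add
    (Real.hasDerivAt_rpow_const (.inl hv.ne'))).congr_deriv ?_
  rw [Real.rpow_sub_one hv.ne', Real.rpow_sub_one hv.ne']
  ring

lemma hasDerivAt_add_one_div {v : ℝ} (hv : v ≠ 0) :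
    HasDerivAt (fun v : ℝ => v + 1 / v) ((v - 1 / v) / v) v := by
  simp only [one_div]
  refine ((hasDerivAt_id' v).add (hasDerivAt_inv hv)).congr_deriv ?_
  field_simp
  ring

lemma two_le_add_one_div {v : ℝ} (hv : 0 < v) : 2 ≤ v + 1 / v := by
  have h : v + 1 / v - 2 = (v - 1) ^ 2 / v := by field_simp; ring
  linarith [div_nonneg (sq_nonneg (v - 1)) hv.le]

lemma exists_bernsteinOn_rpow_add_rpow_neg_of_mem_Ioo (hβ : β ∈ Ioo 0 1) :
    ∃ P : ℝ → ℝ, BernsteinOn P (Ici 2) ∧ ∀ v > 0, P (v + 1 / v) = v ^ β + v ^ (-β) := by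
  obtain ⟨G, hGsmooth, hG, hGeq⟩ := exists_completelyMonotoneOn_rpow_sub_rpow_neg hβ
  obtain ⟨P, hPtwo, hP, hPderiv⟩ := (hG.const_mul hβ.1.le).exists_bernsteinOn isOpen_Ioi
    (contDiffOn_const.mul hGsmooth) (mem_Ioi.2 two_pos) zero_le_two
  refine ⟨P, hP.mono fun w hw => ⟨mem_Ioi.2 (zero_lt_two.trans_le hw), hw⟩, ?_⟩
  have hPcomp : ∀ v ∈ Ioi (0 : ℝ), HasDerivAt (fun v => P (v + 1 / v))
      (β * G (v + 1 / v) * ((v - 1 / v) / v)) v := fun v hv =>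
    (hPderiv _ (zero_lt_two.trans_le (two_le_add_one_div hv))).comp v
      (hasDerivAt_add_one_div (ne_of_gt hv))
  refine isOpen_Ioi.eqOn_of_deriv_eq isPreconnected_Ioi
    (fun v hv => (hPcomp v hv).differentiableAt.differentiableWithinAt)
    (fun v hv => (hasDerivAt_rpow_add_rpow_neg hv).differentiableAt.differentiableWithinAt)
    (fun v hv => ?_) (mem_Ioi.2 one_pos) ?_
  · rw [(hPcomp v hv).deriv, (hasDerivAt_rpow_add_rpow_neg hv).deriv, hGeq v hv]
    ring
  · norm_num [hPtwo]

lemma exists_bernsteinOn_rpow_add_rpow_neg (hβ : β ∈ Icc 0 1) :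
    ∃ P : ℝ → ℝ, BernsteinOn P (Ici 2) ∧ ∀ v > 0, P (v + 1 / v) = v ^ β + v ^ (-β) := by
  rcases eq_endpoints_or_mem_Ioo_of_mem_Icc hβ with rfl | rfl | hβ
  · exact ⟨fun _ => 2, .const zero_le_two, fun v _ => by norm_num⟩
  · refine ⟨fun w => w, .id (Ici_subset_Ici.2 zero_le_two), fun v _ => ?_⟩
    rw [Real.rpow_one, Real.rpow_neg_one, one_div]
  · exact exists_bernsteinOn_rpow_add_rpow_neg_of_mem_Ioo hβ

end RpowAddRpowNeg

/-- The product of the values of `f` at the two roots of `X ^ 2 - y * X + p`: the function of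
`y = a + b` that equals `f a * f b` when `a * b = p`. It turns the condition on
`f (u * v) * f (u / v)` into one on a single function of `u * v + u / v`. -/
noncomputable def rootProduct (f : ℝ → ℝ) (p y : ℝ) : ℝ :=
  f ((y + √(y ^ 2 - 4 * p)) / 2) * f ((y - √(y ^ 2 - 4 * p)) / 2)

section RootProduct

variable {f : ℝ → ℝ} {u r y : ℝ}

lemma rootProduct_mul_add (f : ℝ → ℝ) {a b : ℝ} (hba : b ≤ a) :
    rootProduct f (a * b) (a + b) = f a * f b := by
  have hsq : (a + b) ^ 2 - 4 * (a * b) = (a - b) ^ 2 := by ring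
  rw [rootProduct, hsq, Real.sqrt_sq (sub_nonneg.2 hba)]
  congr 2 <;> ring

lemma roots_mem_Ioo (hu : 0 < u) (hy : y ∈ Ioo (2 * u) r) :
    (y + √(y ^ 2 - 4 * u ^ 2)) / 2 ∈ Ioo 0 r ∧ (y - √(y ^ 2 - 4 * u ^ 2)) / 2 ∈ Ioo 0 r := by
  have hypos : 0 < y := by linarith [hy.1]
  have hsqrt : √(y ^ 2 - 4 * u ^ 2) < y := (Real.sqrt_lt' hypos).2 (by nlinarith)
  have hsqrt_nonneg := Real.sqrt_nonneg (y ^ 2 - 4 * u ^ 2)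
  refine ⟨⟨?_, ?_⟩, ?_, ?_⟩ <;> linarith [hy.2]

lemma contDiffOn_rootProduct {n : WithTop ℕ∞} (hf : ContDiffOn ℝ n f (Ioo 0 r)) (hu : 0 < u) :
    ContDiffOn ℝ n (rootProduct f (u ^ 2)) (Ioo (2 * u) r) := by
  have hsqrt : ContDiffOn ℝ n (fun y => √(y ^ 2 - 4 * u ^ 2)) (Ioo (2 * u) r) :=
    ContDiffOn.sqrt (by fun_prop) fun y hy => by nlinarith [hy.1]
  exact (hf.comp ((contDiffOn_id.add hsqrt).div_const 2) fun y hy => (roots_mem_Ioo hu hy).1).mul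
    (hf.comp ((contDiffOn_id.sub hsqrt).div_const 2) fun y hy => (roots_mem_Ioo hu hy).2)

lemma tendsto_rootProduct {ℓ : ℝ} (hf : ContinuousAt f y) (hlim : Tendsto f (𝓝[>] 0) (𝓝 ℓ))
    (hy : 0 < y) : Tendsto (fun u => rootProduct f (u ^ 2) y) (𝓝[>] 0) (𝓝 (f y * ℓ)) := by
  have hsqrt : Tendsto (fun u : ℝ => √(y ^ 2 - 4 * u ^ 2)) (𝓝[>] 0) (𝓝 y) := by
    have hcont : Continuous fun u : ℝ => √(y ^ 2 - 4 * u ^ 2) := by fun_prop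
    simpa [Real.sqrt_sq hy.le] using (hcont.tendsto 0).mono_left nhdsWithin_le_nhds
  have hlarge : Tendsto (fun u : ℝ => (y + √(y ^ 2 - 4 * u ^ 2)) / 2) (𝓝[>] 0) (𝓝 y) := by
    convert (hsqrt.const_add y).div_const 2 using 2
    ring
  have hsmall : Tendsto (fun u : ℝ => (y - √(y ^ 2 - 4 * u ^ 2)) / 2) (𝓝[>] 0) (𝓝[>] 0) := by
    refine tendsto_nhdsWithin_iff.2 ⟨?_, ?_⟩
    · convert (hsqrt.const_sub y).div_const 2 using 2
      ring
    · filter_upwards [Ioo_mem_nhdsGT (half_pos hy)] with u hu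
      exact (roots_mem_Ioo (r := y + 1) hu.1 ⟨by linarith [hu.2], by linarith⟩).2.1
  exact (hf.tendsto.comp hlarge).mul (hlim.comp hsmall)

end RootProduct

lemma exists_add_one_div_eq {w : ℝ} (hw : 2 ≤ w) : ∃ v ≥ 1, v + 1 / v = w := by
  have hsq := Real.sq_sqrt (show 0 ≤ w ^ 2 - 4 by nlinarith)
  have hsqrt := Real.sqrt_nonneg (w ^ 2 - 4)
  have hne : w + √(w ^ 2 - 4) ≠ 0 := by linarith
  refine ⟨(w + √(w ^ 2 - 4)) / 2, by linarith, ?_⟩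
  field_simp
  linarith

namespace HCM

variable {f : ℝ → ℝ} {r ℓ : ℝ}

lemma congr {g : ℝ → ℝ} (hf : HCM f) (hfg : EqOn g f (Ioi 0)) : HCM g := by
  intro u hu
  obtain ⟨H, hH, hHeq⟩ := hf u hu
  refine ⟨H, hH, fun v hv => ?_⟩
  rw [hfg (mul_pos hu hv), hfg (div_pos hu hv), hHeq v hv]

lemma rpow_mul (hf : HCM f) (p : ℝ) : HCM (fun u => u ^ p * f u) := by
  intro u hu
  obtain ⟨H, hH, hHeq⟩ := hf u hu
  refine ⟨_, hH.const_mul (mul_self_nonneg (u ^ p)), fun v hv => ?_⟩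
  simp only [← hHeq v hv, Real.mul_rpow hu.le hv.le, Real.div_rpow hu.le hv.le]
  field_simp

lemma completelyMonotoneOn_rootProduct (hf : HCM f) {u : ℝ} (hu : 0 < u) :
    CompletelyMonotoneOn (rootProduct f (u ^ 2)) (Ioi (2 * u)) := by
  obtain ⟨H, hH, hHeq⟩ := hf u hu
  have hmaps {y : ℝ} (hy : y ∈ Ioi (2 * u)) : u⁻¹ * y ∈ Ici 2 := by
    rw [mem_Ici, inv_mul_eq_div, le_div_iff₀ hu]
    exact le_of_lt hy
  refine (hH.comp_mul_left (inv_nonneg.2 hu.le) fun y => hmaps).congr isOpen_Ioi fun y hy => ?_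
  obtain ⟨v, hv, hvy⟩ := exists_add_one_div_eq (hmaps hy)
  have hvpos : 0 < v := one_pos.trans_le hv
  have hle : u / v ≤ u * v := (div_le_self hu.le hv).trans (le_mul_of_one_le_right hu.le hv)
  have hprod : u * v * (u / v) = u ^ 2 := by field_simp
  have hsum : u * v + u / v = y := by
    rw [div_eq_mul_one_div u v, ← mul_add, hvy, mul_inv_cancel_left₀ hu.ne']
  calc rootProduct f (u ^ 2) y = f (u * v) * f (u / v) := by
        rw [← rootProduct_mul_add f hle, hprod, hsum]
    _ = H (u⁻¹ * y) := by rw [hHeq v hvpos, hvy]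

lemma antitoneOn_Ioo (hf : HCM f) (hsmooth : ContDiffOn ℝ 1 f (Ioo 0 r))
    (hlim : Tendsto f (𝓝[>] 0) (𝓝 ℓ)) (hℓ : 0 < ℓ) : AntitoneOn f (Ioo 0 r) := by
  intro x hx y hy hxy
  have hlimAt {z : ℝ} (hz : z ∈ Ioo 0 r) := tendsto_rootProduct
    (hsmooth.continuousOn.continuousAt (isOpen_Ioo.mem_nhds hz)) hlim hz.1
  have hle : ∀ᶠ u in 𝓝[>] 0, rootProduct f (u ^ 2) y ≤ rootProduct f (u ^ 2) x := by
    filter_upwards [Ioo_mem_nhdsGT (half_pos hx.1)] with u hu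
    have hanti : AntitoneOn (rootProduct f (u ^ 2)) (Ioo (2 * u) r) :=
      ((hf.completelyMonotoneOn_rootProduct hu.1).mono Ioo_subset_Ioi_self).antitoneOn
        (convex_Ioo _ _) ((contDiffOn_rootProduct hsmooth hu.1).differentiableOn one_ne_zero)
    have hux : 2 * u < x := by linarith [hu.2]
    exact hanti ⟨hux, hx.2⟩ ⟨hux.trans_le hxy, hy.2⟩ hxy
  exact le_of_mul_le_mul_right (le_of_tendsto_of_tendsto (hlimAt hy) (hlimAt hx) hle) hℓ

lemma convexOn_Ioo (hf : HCM f) (hsmooth : ContDiffOn ℝ 2 f (Ioo 0 r))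
    (hlim : Tendsto f (𝓝[>] 0) (𝓝 ℓ)) (hℓ : 0 < ℓ) : ConvexOn ℝ (Ioo 0 r) f := by
  refine ⟨convex_Ioo _ _, fun x hx y hy a b ha hb hab => ?_⟩
  have hz := convex_Ioo 0 r hx hy ha hb hab
  have hlimAt {z : ℝ} (hz : z ∈ Ioo 0 r) := tendsto_rootProduct
    (hsmooth.continuousOn.continuousAt (isOpen_Ioo.mem_nhds hz)) hlim hz.1
  have hle : ∀ᶠ u in 𝓝[>] 0, rootProduct f (u ^ 2) (a • x + b • y) ≤
      a * rootProduct f (u ^ 2) x + b * rootProduct f (u ^ 2) y := by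
    filter_upwards [Ioo_mem_nhdsGT (half_pos (lt_min hx.1 hy.1))] with u hu
    have hconv : ConvexOn ℝ (Ioo (2 * u) r) (rootProduct f (u ^ 2)) :=
      ((hf.completelyMonotoneOn_rootProduct hu.1).mono Ioo_subset_Ioi_self).convexOn
        isOpen_Ioo (convex_Ioo _ _) (contDiffOn_rootProduct hsmooth hu.1)
    have huxy : 2 * u < min x y := by linarith [hu.2]
    exact hconv.2 ⟨(lt_min_iff.1 huxy).1, hx.2⟩ ⟨(lt_min_iff.1 huxy).2, hy.2⟩ ha hb hab
  have hlim_le := le_of_tendsto_of_tendsto (hlimAt hz)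
    (((hlimAt hx).const_mul a).add ((hlimAt hy).const_mul b)) hle
  refine le_of_mul_le_mul_right (hlim_le.trans_eq ?_) hℓ
  simp only [smul_eq_mul]
  ring

end HCM

lemma tendsto_rpow_nhdsGT_zero {p : ℝ} (hp : 0 < p) :
    Tendsto (fun u : ℝ => u ^ p) (𝓝[>] 0) (𝓝 0) := by
  simpa [Real.zero_rpow hp.ne'] using
    (Real.continuousAt_rpow_const 0 p (.inr hp.le)).tendsto.mono_left nhdsWithin_le_nhds

lemma add_mul_le_of_convexOn_Ioo {f : ℝ → ℝ} {r ℓ d x : ℝ} (hf : ConvexOn ℝ (Ioo 0 r) f)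
    (hlim : Tendsto f (𝓝[>] 0) (𝓝 ℓ)) (hslope : Tendsto (fun t => (f t - ℓ) / t) (𝓝[>] 0) (𝓝 d))
    (hx : x ∈ Ioo 0 r) : ℓ + d * x ≤ f x := by
  have hsecant : ∀ t ∈ Ioo 0 x, (f t - ℓ) / t ≤ (f x - ℓ) / x := fun t ht => by
    have hlimAt {y : ℝ} (hy : 0 < y) :
        Tendsto (fun s => (f y - f s) / (y - s)) (𝓝[>] 0) (𝓝 ((f y - ℓ) / y)) :=
      (hlim.const_sub (f y)).div (((continuous_sub_left y).tendsto' 0 y (sub_zero y)).mono_left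
        nhdsWithin_le_nhds) hy.ne'
    refine le_of_tendsto_of_tendsto (hlimAt ht.1) (hlimAt hx.1) ?_
    filter_upwards [Ioo_mem_nhdsGT ht.1] with s hs
    have hsx := hs.2.trans ht.2
    exact hf.secant_mono ⟨hs.1, hsx.trans hx.2⟩ ⟨ht.1, ht.2.trans hx.2⟩ hx hs.2.ne' hsx.ne' ht.2.le
  have hle : d ≤ (f x - ℓ) / x :=
    le_of_tendsto hslope (mem_of_superset (Ioo_mem_nhdsGT hx.1) hsecant)
  linarith [(le_div_iff₀ hx.1).1 hle]

/-- The function `m_α` with `cos (π * α)` replaced by a free parameter `c`, so that the constraints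
on `c` and on `α` can be derived separately. -/
noncomputable def mAlpha (α c u : ℝ) : ℝ :=
  1 / (u ^ (2 * α) + 2 * c * u ^ α + 1)

section MAlpha

variable {α c : ℝ}

lemma mAlpha_mul_mAlpha_div (α c : ℝ) {u v : ℝ} (hu : 0 < u) (hv : 0 < v) :
    mAlpha α c (u * v) * mAlpha α c (u / v) =
      (u ^ (2 * α) * ((v ^ (2 * α) + v ^ (-(2 * α))) +
        2 * c * (u ^ α + u ^ (-α)) * (v ^ α + v ^ (-α)) +
        (u ^ (2 * α) + u ^ (-(2 * α)) + 4 * c ^ 2)))⁻¹ := by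
  simp only [mAlpha, one_div, ← mul_inv, Real.mul_rpow hu.le hv.le, Real.div_rpow hu.le hv.le,
    Real.rpow_neg hu.le, Real.rpow_neg hv.le, two_mul α, Real.rpow_add hu, Real.rpow_add hv]
  congr 1
  field_simp
  ring

lemma hcm_mAlpha (hα : α ∈ Icc 0 (1 / 2)) (hc : 0 ≤ c) : HCM (mAlpha α c) := by
  intro u hu
  obtain ⟨P, hP, hPeq⟩ := exists_bernsteinOn_rpow_add_rpow_neg (β := α)
    ⟨hα.1, hα.2.trans one_half_lt_one.le⟩
  obtain ⟨Q, hQ, hQeq⟩ := exists_bernsteinOn_rpow_add_rpow_neg (β := 2 * α)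
    ⟨by linarith [hα.1], by linarith [hα.2]⟩
  have hconst : 0 < u ^ (2 * α) + u ^ (-(2 * α)) + 4 * c ^ 2 := by positivity
  have hcoeff : 0 ≤ 2 * c * (u ^ α + u ^ (-α)) := by positivity
  have hB : BernsteinOn (fun w => u ^ (2 * α) * (Q w + 2 * c * (u ^ α + u ^ (-α)) * P w +
      (u ^ (2 * α) + u ^ (-(2 * α)) + 4 * c ^ 2))) (Ici 2) :=
    ((hQ.add (hP.const_mul hcoeff)).add (.const hconst.le)).const_mul (by positivity)
  refine ⟨_, hB.completelyMonotoneOn_inv fun w hw => ?_, fun v hv => ?_⟩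
  · have hPw := hP.nonneg w hw
    have hQw := hQ.nonneg w hw
    positivity
  · rw [mAlpha_mul_mAlpha_div α c hu hv, hPeq v hv, hQeq v hv]

lemma mAlpha_denom_pos (hα : 0 < α) (hc : -1 ≤ c) {u : ℝ} (hu : u ∈ Ioo 0 1) :
    0 < u ^ (2 * α) + 2 * c * u ^ α + 1 := by
  have hpos : 0 < u ^ α := Real.rpow_pos_of_pos hu.1 α
  have hlt : u ^ α < 1 := Real.rpow_lt_one hu.1.le hu.2 hα
  rw [two_mul α, Real.rpow_add hu.1]
  nlinarith

lemma contDiffOn_mAlpha (hα : 0 < α) (hc : -1 ≤ c) {n : WithTop ℕ∞} :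
    ContDiffOn ℝ n (mAlpha α c) (Ioo 0 1) := by
  have hrpow (p : ℝ) : ContDiffOn ℝ n (fun u : ℝ => u ^ p) (Ioo 0 1) :=
    contDiffOn_id.rpow_const_of_ne fun u hu => hu.1.ne'
  exact contDiffOn_const.div
    (((hrpow _).add (contDiffOn_const.mul (hrpow _))).add contDiffOn_const)
    fun u hu => (mAlpha_denom_pos hα hc hu).ne'

lemma tendsto_mAlpha (hα : 0 < α) : Tendsto (mAlpha α c) (𝓝[>] 0) (𝓝 1) := by
  have hdenom := ((tendsto_rpow_nhdsGT_zero (mul_pos two_pos hα)).add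
    ((tendsto_rpow_nhdsGT_zero hα).const_mul (2 * c))).add_const 1
  refine Tendsto.congr (fun u => (one_div _).symm) ?_
  simpa using hdenom.inv₀ (by norm_num)

lemma tendsto_slope_mAlpha (hα : 1 < α) (hc : -1 ≤ c) :
    Tendsto (fun t => (mAlpha α c t - 1) / t) (𝓝[>] 0) (𝓝 0) := by
  have hnum := (tendsto_rpow_nhdsGT_zero (p := 2 * α - 1) (by linarith)).add
    ((tendsto_rpow_nhdsGT_zero (sub_pos.2 hα)).const_mul (2 * c))
  have hlim := hnum.neg.mul (tendsto_mAlpha (c := c) (one_pos.trans hα))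
  simp only [mul_zero, add_zero, neg_zero, zero_mul] at hlim
  refine hlim.congr' ?_
  filter_upwards [Ioo_mem_nhdsGT one_pos] with t ht
  have hdenom := (mAlpha_denom_pos (one_pos.trans hα) hc ht).ne'
  have htpos := ht.1.ne'
  rw [mAlpha, Real.rpow_sub_one htpos, Real.rpow_sub_one htpos]
  field_simp
  ring

lemma nonneg_of_hcm_mAlpha (hα : 0 < α) (hc : -1 ≤ c) (h : HCM (mAlpha α c)) : 0 ≤ c := by
  have hanti := h.antitoneOn_Ioo (contDiffOn_mAlpha hα hc) (tendsto_mAlpha hα) one_pos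
  have hbound : ∀ u ∈ Ioo (0 : ℝ) 1, 0 ≤ u ^ α + 2 * c := fun u hu => by
    have hle : mAlpha α c u ≤ 1 := by
      refine ge_of_tendsto (tendsto_mAlpha (c := c) hα) ?_
      filter_upwards [Ioo_mem_nhdsGT hu.1] with t ht
      exact hanti ⟨ht.1, ht.2.trans hu.2⟩ hu ht.2.le
    rw [mAlpha, div_le_one (mAlpha_denom_pos hα hc hu), two_mul α, Real.rpow_add hu.1] at hle
    have hprod : 0 ≤ u ^ α * (u ^ α + 2 * c) := by linarith
    exact nonneg_of_mul_nonneg_right hprod (Real.rpow_pos_of_pos hu.1 α)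
  have hlim : 0 ≤ 0 + 2 * c := ge_of_tendsto ((tendsto_rpow_nhdsGT_zero hα).add_const (2 * c))
    (mem_of_superset (Ioo_mem_nhdsGT one_pos) hbound)
  linarith

lemma le_one_of_hcm_mAlpha (hc : 0 ≤ c) (h : HCM (mAlpha α c)) : α ≤ 1 := by
  by_contra! hα
  have hαpos := one_pos.trans hα
  have hconv := h.convexOn_Ioo (contDiffOn_mAlpha hαpos (by linarith)) (tendsto_mAlpha hαpos)
    one_pos
  have hle := add_mul_le_of_convexOn_Ioo hconv (tendsto_mAlpha hαpos)
    (tendsto_slope_mAlpha hα (by linarith)) (x := 1 / 2) (by norm_num)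
  have hlt : mAlpha α c (1 / 2) < 1 := by
    rw [mAlpha, div_lt_one (by positivity)]
    exact lt_add_of_pos_left 1 (by positivity)
  linarith

lemma HCM.mAlpha_neg (h : HCM (mAlpha α c)) : HCM (mAlpha (-α) c) := by
  refine (h.rpow_mul (2 * α)).congr fun u hu => ?_
  have hpos : 0 < u ^ α := Real.rpow_pos_of_pos hu α
  simp only [mAlpha, two_mul, Real.rpow_add hu, Real.rpow_neg (le_of_lt hu)]
  field_simp
  ring

lemma hcm_mAlpha_abs_iff : HCM (mAlpha |α| c) ↔ HCM (mAlpha α c) := by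
  rcases abs_choice α with hα | hα <;> rw [hα]
  exact ⟨fun h => neg_neg α ▸ h.mAlpha_neg, .mAlpha_neg⟩

end MAlpha

theorem mAlpha_HCM_iff (α : ℝ) :
    HCM (fun u : ℝ =>
        1 / (u ^ (2 * α) + 2 * Real.cos (Real.pi * α) * u ^ α + 1)) ↔ |α| ≤ 1/2 := by
  change HCM (mAlpha α (Real.cos (Real.pi * α))) ↔ _
  rw [← hcm_mAlpha_abs_iff, ← Real.cos_abs, abs_mul, abs_of_pos Real.pi_pos]
  have hpi := Real.pi_pos
  constructor
  · intro h
    by_contra! hα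
    have hcos := nonneg_of_hcm_mAlpha (one_half_pos.trans hα) (Real.neg_one_le_cos _) h
    have hα_le := le_one_of_hcm_mAlpha hcos h
    exact hcos.not_gt (Real.cos_neg_of_pi_div_two_lt_of_lt (by nlinarith) (by nlinarith))
  · intro hα
    have hα_nonneg := abs_nonneg α
    exact hcm_mAlpha ⟨hα_nonneg, hα⟩
      (Real.cos_nonneg_of_mem_Icc ⟨by nlinarith, by nlinarith⟩)
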